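/- Let f be monostable (assumption (A1)), and let c* < 0 be the threshold speed such that (uncontrolled) traveling profiles exist exactly for speeds ≤ c*. Then for every c > c* there exists a unique continuous, nondecreasing function U : ℝ → [0,1] such that: U(x) = 0 for all x ≤ 0; U is C² on (0,∞) and satisfies U''(x) + c·U'(x) + f(U(x)) = 0 for all x > 0; and U(x) → 1 as x → +∞. Moreover the right derivative U'(0+) exists and is strictly positive. -/

import Mathlib

open Set Filter

/-- A traveling profile of speed `c` for `u_t = f(u) + u_xx`. -/
def IsTravelingProfile (f : ℝ → ℝ) (c : ℝ) (U : ℝ → ℝ) : Prop :=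
  ContDiff ℝ 2 U ∧ (∀ x, U x ∈ Icc (0:ℝ) 1) ∧
  (∀ x, deriv (deriv U) x + c * deriv U x + f (U x) = 0) ∧
  Tendsto U atBot (nhds 0) ∧ Tendsto U atTop (nhds 1)

/-- The optimal controlled profile of problem (P1): continuous, nondecreasing,
vanishing for `x ≤ 0`, solving the traveling wave ODE on `(0,∞)`, tending to `1`. -/
def IsOptimalP1Profile (f : ℝ → ℝ) (c : ℝ) (U : ℝ → ℝ) : Prop :=
  Continuous U ∧ Monotone U ∧ (∀ x, U x ∈ Icc (0:ℝ) 1) ∧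
  (∀ x ≤ (0:ℝ), U x = 0) ∧ ContDiffOn ℝ 2 U (Ioi 0) ∧
  (∀ x > (0:ℝ), deriv (deriv U) x + c * deriv U x + f (U x) = 0) ∧
  Tendsto U atTop (nhds 1)

open scoped NNReal Topology BoundedContinuousFunction

/-!
*Existence.* Extending `f` by `0` outside `[0, 1]` makes `(u, u')` the trajectory of a globally
Lipschitz planar field. A continuity (shooting) argument produces an entire trajectory with
`u' > 0` and `u < 1`, which must tend to `1` at `+∞`. If `u` stayed positive it would tend to `0` at
`-∞` and be an uncontrolled traveling profile of speed `c`; hence `u` vanishes at some point, where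
its slope is positive, and cutting it off to the left of that point gives `U`.

*Uniqueness.* A profile is strictly increasing on `[0, ∞)`, so its slope is a function `P` of its
height, and `P' = -c - f / P`. The difference of two such functions is a solution of `w' = k w` with
`k ≥ 0`; if it were nonzero it would not decrease towards height `1`, contradicting that slopes come
arbitrarily close to `0` there. So all profiles follow the same phase curve, hence are translates of
one another, and the translation is fixed by the point where they leave `0`.
-/

/-! ### Global flows of Lipschitz vector fields -/

section LipschitzFlow

variable {E : Type*} [NormedAddCommGroup E] [NormedSpace ℝ E] {v : E → E} {K : ℝ≥0}

theorem norm_integral_le_of_norm_le_cosh {h : ℝ → E} {C κ : ℝ} (hκ : 0 < κ)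
    (hh : ∀ s, ‖h s‖ ≤ C * Real.cosh (κ * s)) (t : ℝ) :
    ‖∫ s in (0 : ℝ)..t, h s‖ ≤ C / κ * Real.cosh (κ * t) := by
  have hC : 0 ≤ C := by simpa using (norm_nonneg _).trans (hh 0)
  have hprimitive (s : ℝ) :
      HasDerivAt (fun s ↦ C / κ * Real.sinh (κ * s)) (C * Real.cosh (κ * s)) s := by
    convert! (((hasDerivAt_id s).const_mul κ).sinh).const_mul (C / κ) using 1
    simp only [id]
    field_simp
  have hint : ∫ s in (0 : ℝ)..t, C * Real.cosh (κ * s) = C / κ * Real.sinh (κ * t) := by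
    rw [intervalIntegral.integral_eq_sub_of_hasDerivAt (fun s _ ↦ hprimitive s)
      (Continuous.intervalIntegrable (by fun_prop) _ _)]
    simp
  have hsinh : |Real.sinh (κ * t)| ≤ Real.cosh (κ * t) :=
    Real.abs_sinh (κ * t) ▸ Real.cosh_abs (κ * t) ▸ (Real.sinh_lt_cosh _).le
  calc ‖∫ s in (0 : ℝ)..t, h s‖
      ≤ |∫ s in (0 : ℝ)..t, C * Real.cosh (κ * s)| :=
        intervalIntegral.norm_integral_le_abs_of_norm_le (.of_forall hh)
          (Continuous.intervalIntegrable (by fun_prop) _ _)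
    _ = C / κ * |Real.sinh (κ * t)| := by rw [hint, abs_mul, abs_of_nonneg (by positivity)]
    _ ≤ C / κ * Real.cosh (κ * t) := by gcongr

theorem norm_inv_cosh_smul_integral_le {h : ℝ → E} {C κ : ℝ} (hκ : 0 < κ)
    (hh : ∀ s, ‖h s‖ ≤ C * Real.cosh (κ * s)) (t : ℝ) :
    ‖(Real.cosh (κ * t))⁻¹ • ∫ s in (0 : ℝ)..t, h s‖ ≤ C / κ := by
  have hcosh := Real.cosh_pos (κ * t)
  rw [norm_smul, norm_inv, Real.norm_of_nonneg hcosh.le, inv_mul_le_iff₀ hcosh, mul_comm]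
  exact norm_integral_le_of_norm_le_cosh hκ hh t

/-- The Picard operator of `γ' = v ∘ γ`, `γ 0 = x`, in the unknown `g` given by
`γ t = x + cosh (κ t) • g t`. For large `κ` this (Bielecki) weight makes it a contraction of the
bounded continuous functions on all of `ℝ`, so that no local solutions have to be glued. -/
noncomputable def weightedPicard (v : E → E) (x : E) (κ : ℝ) (g : ℝ → E) (t : ℝ) : E :=
  (Real.cosh (κ * t))⁻¹ • ∫ s in (0 : ℝ)..t, v (x + Real.cosh (κ * s) • g s)

theorem continuous_weightedPicard (hv : Continuous v) (x : E) (κ : ℝ) {g : ℝ → E}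
    (hg : Continuous g) : Continuous (weightedPicard v x κ g) := by
  have hintegrand : Continuous fun s ↦ v (x + Real.cosh (κ * s) • g s) := by fun_prop
  refine Continuous.smul (Continuous.inv₀ (by fun_prop) fun t ↦ (Real.cosh_pos _).ne') ?_
  exact intervalIntegral.continuous_primitive (fun a b ↦ hintegrand.intervalIntegrable a b) 0

theorem norm_weightedPicard_le (hv : LipschitzWith K v) (x : E) {κ : ℝ} (hκ : 0 < κ)
    (g : ℝ →ᵇ E) (t : ℝ) : ‖weightedPicard v x κ g t‖ ≤ (‖v x‖ + K * ‖g‖) / κ := by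
  refine norm_inv_cosh_smul_integral_le hκ (fun s ↦ ?_) t
  have hcosh := Real.one_le_cosh (κ * s)
  calc ‖v (x + Real.cosh (κ * s) • g s)‖
      ≤ ‖v x‖ + ‖v (x + Real.cosh (κ * s) • g s) - v x‖ := norm_le_norm_add_norm_sub' _ _
    _ ≤ ‖v x‖ + K * ‖Real.cosh (κ * s) • g s‖ := by
        gcongr
        simpa using hv.norm_sub_le (x + Real.cosh (κ * s) • g s) x
    _ ≤ ‖v x‖ * Real.cosh (κ * s) + K * (Real.cosh (κ * s) * ‖g‖) := by
        rw [norm_smul, Real.norm_of_nonneg (by positivity)]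
        gcongr
        · exact le_mul_of_one_le_right (norm_nonneg _) hcosh
        · exact g.norm_coe_le_norm s
    _ = (‖v x‖ + K * ‖g‖) * Real.cosh (κ * s) := by ring

theorem dist_weightedPicard_le (hv : LipschitzWith K v) (x : E) {κ : ℝ} (hκ : 0 < κ)
    (g h : ℝ →ᵇ E) (t : ℝ) :
    dist (weightedPicard v x κ g t) (weightedPicard v x κ h t) ≤ K / κ * dist g h := by
  have hint (k : ℝ →ᵇ E) :
      IntervalIntegrable (fun s ↦ v (x + Real.cosh (κ * s) • k s)) MeasureTheory.volume 0 t :=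
    Continuous.intervalIntegrable (hv.continuous.comp (by fun_prop)) _ _
  rw [dist_eq_norm, weightedPicard, weightedPicard, ← smul_sub,
    ← intervalIntegral.integral_sub (hint g) (hint h), div_mul_eq_mul_div]
  refine norm_inv_cosh_smul_integral_le hκ (fun s ↦ ?_) t
  calc ‖v (x + Real.cosh (κ * s) • g s) - v (x + Real.cosh (κ * s) • h s)‖
      ≤ K * ‖Real.cosh (κ * s) • (g s - h s)‖ := by
        simpa [smul_sub] using
          hv.norm_sub_le (x + Real.cosh (κ * s) • g s) (x + Real.cosh (κ * s) • h s)
    _ = K * (Real.cosh (κ * s) * dist (g s) (h s)) := by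
        rw [norm_smul, Real.norm_of_nonneg (Real.cosh_pos _).le, dist_eq_norm]
    _ ≤ K * (Real.cosh (κ * s) * dist g h) := by
        gcongr
        exact g.dist_coe_le_dist s
    _ = K * dist g h * Real.cosh (κ * s) := by ring

theorem continuous_initial_of_lipschitzWith (hv : LipschitzWith K v) {φ : E → ℝ → E}
    (hφ₀ : ∀ x, φ x 0 = x) (hφ : ∀ x t, HasDerivAt (φ x) (v (φ x t)) t) {t : ℝ} (ht : 0 ≤ t) :
    Continuous (φ · t) := by
  have hcont (x : E) : ContinuousOn (φ x) (Icc 0 t) :=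
    fun s _ ↦ (hφ x s).continuousAt.continuousWithinAt
  refine (LipschitzWith.of_dist_le_mul (K := (Real.exp (K * t)).toNNReal) fun x y ↦ ?_).continuous
  have hgronwall := dist_le_of_trajectories_ODE (fun _ ↦ hv)
    (hcont x) (fun s _ ↦ (hφ x s).hasDerivWithinAt)
    (hcont y) (fun s _ ↦ (hφ y s).hasDerivWithinAt) le_rfl t (right_mem_Icc.2 ht)
  simpa [hφ₀, mul_comm, Real.exp_nonneg] using hgronwall

variable [CompleteSpace E]

theorem exists_weightedPicard_eq_self (hv : LipschitzWith K v) (x : E) :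
    ∃ κ : ℝ, ∃ g : ℝ →ᵇ E, weightedPicard v x κ g = g := by
  let κ : ℝ≥0 := K + 1
  have hκ : (0 : ℝ) < κ := by positivity
  let N (g : ℝ →ᵇ E) : ℝ →ᵇ E := BoundedContinuousFunction.ofNormedAddCommGroup
    (weightedPicard v x κ g) (continuous_weightedPicard hv.continuous x κ g.continuous) _
    (norm_weightedPicard_le hv x hκ g)
  have hN : ContractingWith (K / κ) N := by
    refine ⟨(div_lt_one (by positivity)).2 (lt_add_one K), LipschitzWith.of_dist_le_mul ?_⟩
    exact fun g h ↦ (BoundedContinuousFunction.dist_le (by positivity)).2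
      (dist_weightedPicard_le hv x hκ g h)
  exact ⟨κ, hN.fixedPoint N, congrArg DFunLike.coe hN.fixedPoint_isFixedPt⟩

theorem exists_forall_hasDerivAt_of_lipschitzWith (hv : LipschitzWith K v) (x : E) :
    ∃ γ : ℝ → E, γ 0 = x ∧ ∀ t, HasDerivAt γ (v (γ t)) t := by
  obtain ⟨κ, g, hg⟩ := exists_weightedPicard_eq_self hv x
  let γ (t : ℝ) : E := x + Real.cosh (κ * t) • g t
  have hγ_cont : Continuous fun t ↦ v (γ t) := hv.continuous.comp (by fun_prop)
  have hγ (t : ℝ) : γ t = x + ∫ s in (0 : ℝ)..t, v (γ s) := by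
    simp only [γ]
    rw [← hg, weightedPicard, smul_inv_smul₀ (Real.cosh_pos _).ne', hg]
  refine ⟨γ, by simpa using hγ 0, fun t ↦ ?_⟩
  rw [funext hγ]
  simpa only [← hγ] using (hγ_cont.integral_hasStrictDerivAt 0 t).hasDerivAt.const_add x

end LipschitzFlow

/-! ### The traveling wave system -/

/-- `u` solves the traveling wave equation `u'' + c u' + F(u) = 0` on `s`, written as a
first-order system with the phase variable `p = u'`. -/
structure IsWaveOn (F : ℝ → ℝ) (c : ℝ) (u p : ℝ → ℝ) (s : Set ℝ) : Prop where
  hasDerivAt_fst : ∀ x ∈ s, HasDerivAt u (p x) x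
  hasDerivAt_snd : ∀ x ∈ s, HasDerivAt p (-c * p x - F (u x)) x

/-- The vector field on the phase plane whose integral curves are the solutions `(u, u')` of the
traveling wave equation. -/
def waveField (F : ℝ → ℝ) (c : ℝ) (z : ℝ × ℝ) : ℝ × ℝ :=
  (z.2, -c * z.2 - F z.1)

theorem exists_lipschitzWith_waveField {F : ℝ → ℝ} {K : ℝ≥0} (hF : LipschitzWith K F) (c : ℝ) :
    ∃ L, LipschitzWith L (waveField F c) :=
  ⟨_, LipschitzWith.prod_snd.prodMk
    (((-c) • ContinuousLinearMap.snd ℝ ℝ ℝ).lipschitz.sub (hF.comp LipschitzWith.prod_fst))⟩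

theorem isWaveOn_univ_of_hasDerivAt_waveField {F : ℝ → ℝ} {c : ℝ} {γ : ℝ → ℝ × ℝ}
    (hγ : ∀ t, HasDerivAt γ (waveField F c (γ t)) t) :
    IsWaveOn F c (fun t ↦ (γ t).1) (fun t ↦ (γ t).2) univ :=
  ⟨fun t _ ↦ (hγ t).fst, fun t _ ↦ (hγ t).snd⟩

theorem exists_isWaveOn_univ_family {F : ℝ → ℝ} {K : ℝ≥0} (hF : LipschitzWith K F) (c : ℝ)
    {X : Type*} [TopologicalSpace X] {α β : X → ℝ} (hα : Continuous α) (hβ : Continuous β) :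
    ∃ u p : X → ℝ → ℝ, (∀ s, IsWaveOn F c (u s) (p s) univ) ∧ (∀ s, u s 0 = α s) ∧
      (∀ s, p s 0 = β s) ∧ ∀ t ≥ 0, Continuous (u · t) ∧ Continuous (p · t) := by
  obtain ⟨L, hL⟩ := exists_lipschitzWith_waveField hF c
  choose φ hφ₀ hφ using exists_forall_hasDerivAt_of_lipschitzWith hL
  have hcont {t : ℝ} (ht : 0 ≤ t) : Continuous fun s ↦ φ (α s, β s) t :=
    (continuous_initial_of_lipschitzWith hL hφ₀ hφ ht).comp (hα.prodMk hβ)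
  exact ⟨fun s t ↦ (φ (α s, β s) t).1, fun s t ↦ (φ (α s, β s) t).2,
    fun s ↦ isWaveOn_univ_of_hasDerivAt_waveField (hφ (α s, β s)),
    fun s ↦ congrArg Prod.fst (hφ₀ _), fun s ↦ congrArg Prod.snd (hφ₀ _),
    fun t ht ↦ ⟨(hcont ht).fst, (hcont ht).snd⟩⟩

theorem isWaveOn_const {F : ℝ → ℝ} {b : ℝ} (hb : F b = 0) (c : ℝ) (s : Set ℝ) :
    IsWaveOn F c (fun _ ↦ b) (fun _ ↦ 0) s :=
  ⟨fun x _ ↦ hasDerivAt_const x b, fun x _ ↦ by simpa [hb] using hasDerivAt_const x (0 : ℝ)⟩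

theorem exists_tendsto_atTop_forall_deriv_eq_sub {g g' : ℝ → ℝ} {a : ℝ}
    (hg : ∀ x > a, HasDerivAt g (g' x) x) :
    ∃ ξ : ℝ → ℝ, Tendsto ξ atTop atTop ∧ ∀ x > a, g' (ξ x) = g (x + 1) - g x := by
  have hmvt (x : ℝ) : ∃ ξ, x ≤ ξ ∧ (x > a → g' ξ = g (x + 1) - g x) := by
    by_cases hx : x > a
    · obtain ⟨ξ, hξ, heq⟩ := exists_hasDerivAt_eq_slope g g' (lt_add_one x)
        (fun y hy ↦ (hg y (hx.trans_le hy.1)).continuousAt.continuousWithinAt)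
        (fun y hy ↦ hg y (hx.trans hy.1))
      exact ⟨ξ, hξ.1.le, fun _ ↦ by simpa using heq⟩
    · exact ⟨x, le_rfl, fun h ↦ absurd h hx⟩
  choose ξ hle heq using hmvt
  exact ⟨ξ, tendsto_atTop_mono hle tendsto_id, heq⟩

namespace IsWaveOn

variable {F u p u₁ p₁ u₂ p₂ : ℝ → ℝ} {c a b t₀ t₁ t₂ : ℝ} {s : Set ℝ} {K : ℝ≥0}

theorem mono {s' : Set ℝ} (h : IsWaveOn F c u p s) (hs : s' ⊆ s) : IsWaveOn F c u p s' :=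
  ⟨fun x hx ↦ h.hasDerivAt_fst x (hs hx), fun x hx ↦ h.hasDerivAt_snd x (hs hx)⟩

theorem continuousOn_fst (h : IsWaveOn F c u p s) : ContinuousOn u s :=
  fun x hx ↦ (h.hasDerivAt_fst x hx).continuousAt.continuousWithinAt

theorem continuousOn_snd (h : IsWaveOn F c u p s) : ContinuousOn p s :=
  fun x hx ↦ (h.hasDerivAt_snd x hx).continuousAt.continuousWithinAt

theorem comp_const_add (h : IsWaveOn F c u p s) (r : ℝ) :
    IsWaveOn F c (fun x ↦ u (r + x)) (fun x ↦ p (r + x)) ((r + ·) ⁻¹' s) :=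
  ⟨fun x hx ↦ (h.hasDerivAt_fst _ hx).comp_const_add r x,
    fun x hx ↦ (h.hasDerivAt_snd _ hx).comp_const_add r x⟩

theorem comp_neg (h : IsWaveOn F c u p s) :
    IsWaveOn F (-c) (fun x ↦ u (-x)) (fun x ↦ -p (-x)) (Neg.neg ⁻¹' s) := by
  refine ⟨fun x hx ↦ ?_, fun x hx ↦ ?_⟩
  · convert! (h.hasDerivAt_fst _ hx).scomp x (hasDerivAt_neg x) using 1
    simp
  · convert! ((h.hasDerivAt_snd _ hx).scomp x (hasDerivAt_neg x)).neg using 1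
    simp only [smul_eq_mul]
    ring

theorem congr_fst (h : IsWaveOn F c u p s) (hs : IsOpen s) (hu : EqOn u₁ u s) :
    IsWaveOn F c u₁ p s :=
  ⟨fun x hx ↦ (h.hasDerivAt_fst x hx).congr_of_eventuallyEq
      (eventually_of_mem (hs.mem_nhds hx) hu),
    fun x hx ↦ by simpa only [hu hx] using h.hasDerivAt_snd x hx⟩

theorem deriv_eqOn (h : IsWaveOn F c u p s) : EqOn (deriv u) p s :=
  fun x hx ↦ (h.hasDerivAt_fst x hx).deriv

theorem deriv_deriv_add (h : IsWaveOn F c u p s) (hs : IsOpen s) {x : ℝ} (hx : x ∈ s) :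
    deriv (deriv u) x + c * deriv u x + F (u x) = 0 := by
  have hderiv : deriv u =ᶠ[𝓝 x] p := eventually_of_mem (hs.mem_nhds hx) h.deriv_eqOn
  rw [hderiv.deriv_eq, (h.hasDerivAt_snd x hx).deriv, h.deriv_eqOn hx]
  ring

theorem contDiffOn_two (h : IsWaveOn F c u p s) (hs : IsOpen s) (hF : Continuous F) :
    ContDiffOn ℝ 2 u s := by
  have hp : ContDiffOn ℝ 1 p s := by
    have hp' : ContinuousOn (fun x ↦ -c * p x - F (u x)) s :=
      (continuousOn_const.mul h.continuousOn_snd).sub (hF.comp_continuousOn h.continuousOn_fst)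
    rw [← zero_add 1, contDiffOn_succ_iff_deriv_of_isOpen hs, contDiffOn_zero]
    exact ⟨fun x hx ↦ (h.hasDerivAt_snd x hx).differentiableAt.differentiableWithinAt, by simp,
      hp'.congr fun x hx ↦ (h.hasDerivAt_snd x hx).deriv⟩
  rw [← one_add_one_eq_two, contDiffOn_succ_iff_deriv_of_isOpen hs]
  exact ⟨fun x hx ↦ (h.hasDerivAt_fst x hx).differentiableAt.differentiableWithinAt, by simp,
    hp.congr h.deriv_eqOn⟩

theorem eqOn_Ioi (hF : LipschitzWith K F) (h₁ : IsWaveOn F c u₁ p₁ (Ioi a))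
    (h₂ : IsWaveOn F c u₂ p₂ (Ioi a)) (ht₀ : a < t₀) (hu : u₁ t₀ = u₂ t₀) (hp : p₁ t₀ = p₂ t₀) :
    EqOn u₁ u₂ (Ioi a) ∧ EqOn p₁ p₂ (Ioi a) := by
  obtain ⟨L, hL⟩ := exists_lipschitzWith_waveField hF c
  have hpair : EqOn (fun t ↦ (u₁ t, p₁ t)) (fun t ↦ (u₂ t, p₂ t)) (Ioi a) := fun t ht ↦
    ODE_solution_unique_of_mem_Ioo (v := fun _ ↦ waveField F c) (s := fun _ ↦ univ)
      (b := max t t₀ + 1) (fun _ _ ↦ hL.lipschitzOnWith) ⟨ht₀, by grind⟩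
      (fun x hx ↦ ⟨(h₁.hasDerivAt_fst x hx.1).prodMk (h₁.hasDerivAt_snd x hx.1), mem_univ _⟩)
      (fun x hx ↦ ⟨(h₂.hasDerivAt_fst x hx.1).prodMk (h₂.hasDerivAt_snd x hx.1), mem_univ _⟩)
      (by rw [hu, hp]) ⟨ht, by grind⟩
  exact ⟨fun t ht ↦ congrArg Prod.fst (hpair ht), fun t ht ↦ congrArg Prod.snd (hpair ht)⟩

theorem eq_const_of_equilibrium (hF : LipschitzWith K F) (h : IsWaveOn F c u p (Ioi a))
    (ht₀ : a < t₀) (hp : p t₀ = 0) (hu : F (u t₀) = 0) :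
    (∀ t > a, u t = u t₀) ∧ ∀ t > a, p t = 0 :=
  h.eqOn_Ioi hF (isWaveOn_const hu c _) ht₀ rfl hp

theorem antitoneOn_exp_mul_snd (h : IsWaveOn F c u p (Ioi a)) (hF : ∀ y, 0 ≤ F y) :
    AntitoneOn (fun t ↦ Real.exp (c * t) * p t) (Ioi a) := by
  have hderiv : ∀ t > a, HasDerivAt (fun t ↦ Real.exp (c * t) * p t)
      (-(Real.exp (c * t) * F (u t))) t := fun t ht ↦ by
    convert! (((hasDerivAt_id t).const_mul c).exp).mul (h.hasDerivAt_snd t ht) using 1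
    simp only [id]
    ring
  refine antitoneOn_of_hasDerivWithinAt_nonpos (convex_Ioi a)
    (fun t ht ↦ (hderiv t ht).continuousAt.continuousWithinAt)
    (fun t ht ↦ (hderiv t (interior_subset ht)).hasDerivWithinAt) fun t _ ↦ ?_
  have hFu := hF (u t)
  exact neg_nonpos.2 (by positivity)

theorem snd_nonpos_of_le (h : IsWaveOn F c u p (Ioi a)) (hF : ∀ y, 0 ≤ F y) (ht₁ : a < t₁)
    (hp : p t₁ ≤ 0) (ht : t₁ ≤ t₂) : p t₂ ≤ 0 := by
  have hanti := h.antitoneOn_exp_mul_snd hF ht₁ (ht₁.trans_le ht) ht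
  have hnonpos := hanti.trans (mul_nonpos_of_nonneg_of_nonpos (Real.exp_nonneg _) hp)
  exact nonpos_of_mul_nonpos_right hnonpos (Real.exp_pos _)

theorem snd_nonneg_of_le (h : IsWaveOn F c u p (Ioi a)) (hF : ∀ y, 0 ≤ F y) (ht₁ : a < t₁)
    (hp : 0 ≤ p t₂) (ht : t₁ ≤ t₂) : 0 ≤ p t₁ := by
  have hanti := h.antitoneOn_exp_mul_snd hF ht₁ (ht₁.trans_le ht) ht
  exact nonneg_of_mul_nonneg_right ((mul_nonneg (Real.exp_nonneg _) hp).trans hanti)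
    (Real.exp_pos _)

/-- As `exp (c t) * p t` is antitone, `p` vanishes at all late times, hence `F(u)` does too. -/
theorem equilibrium_of_snd_nonpos (hF : LipschitzWith K F) (hF₀ : ∀ y, 0 ≤ F y)
    (h : IsWaveOn F c u p (Ioi a)) (hp : ∀ᶠ t in atTop, 0 ≤ p t) (ht₀ : a < t₀) (hp₀ : p t₀ ≤ 0)
    (t : ℝ) (ht : a < t) : F (u t) = 0 ∧ p t = 0 := by
  obtain ⟨T, hT⟩ := eventually_atTop.1 hp
  let t₁ := max T t₀ + 1
  have ht₁ : a < t₁ := by grind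
  have hzero : p =ᶠ[𝓝 t₁] fun _ ↦ 0 := by
    filter_upwards [lt_mem_nhds (show max T t₀ < t₁ by grind)] with x hx
    exact le_antisymm (h.snd_nonpos_of_le hF₀ ht₀ hp₀ (by grind)) (hT x (by grind))
  have hFu : F (u t₁) = 0 := by
    have hderiv := (h.hasDerivAt_snd t₁ ht₁).unique
      ((hasDerivAt_const t₁ (0 : ℝ)).congr_of_eventuallyEq hzero)
    simpa [hzero.eq_of_nhds] using hderiv
  obtain ⟨hu, hp⟩ := h.eq_const_of_equilibrium hF ht₁ hzero.eq_of_nhds hFu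
  exact ⟨by rw [hu t ht, hFu], hp t ht⟩

theorem fst_le_of_snd_eq_zero (h : IsWaveOn F c u p (Ioi a)) (hF : ∀ y, 0 ≤ F y) (ht₀ : a < t₀)
    (hp : p t₀ = 0) {t : ℝ} (ht : a < t) : u t ≤ u t₀ := by
  rcases le_total t t₀ with htt | htt
  · have hmono : MonotoneOn u (Ioc a t₀) :=
      monotoneOn_of_hasDerivWithinAt_nonneg (convex_Ioc a t₀)
        (h.continuousOn_fst.mono Ioc_subset_Ioi_self)
        (fun x hx ↦ (h.hasDerivAt_fst x (interior_subset hx).1).hasDerivWithinAt)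
        fun x hx ↦ h.snd_nonneg_of_le hF (interior_subset hx).1 hp.ge (interior_subset hx).2
    exact hmono ⟨ht, htt⟩ ⟨ht₀, le_rfl⟩ htt
  · have hanti : AntitoneOn u (Ici t₀) :=
      antitoneOn_of_hasDerivWithinAt_nonpos (convex_Ici t₀)
        (h.continuousOn_fst.mono (Ici_subset_Ioi.2 ht₀))
        (fun x hx ↦ (h.hasDerivAt_fst x (ht₀.trans_le (interior_subset hx))).hasDerivWithinAt)
        fun x hx ↦ h.snd_nonpos_of_le hF ht₀ hp.le (interior_subset hx)
    exact hanti self_mem_Ici htt htt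

theorem fst_le_of_snd_sign_change (hF : LipschitzWith K F) (hF₀ : ∀ y, 0 ≤ F y)
    (hb : ∀ y > b, F y = 0) (h : IsWaveOn F c u p (Ioi a)) (ht₁ : a < t₁) (ht : t₁ ≤ t₂)
    (hp₁ : 0 ≤ p t₁) (hp₂ : p t₂ < 0) {t : ℝ} (hat : a < t) : u t ≤ b := by
  obtain ⟨τ, hτ, hpτ⟩ : ∃ τ ∈ Icc t₁ t₂, p τ = 0 :=
    intermediate_value_Icc' ht (h.continuousOn_snd.mono fun x hx ↦ ht₁.trans_le hx.1)
      ⟨hp₂.le, hp₁⟩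
  have haτ : a < τ := ht₁.trans_le hτ.1
  refine (h.fst_le_of_snd_eq_zero hF₀ haτ hpτ hat).trans (le_of_not_gt fun hlt ↦ hp₂.ne ?_)
  exact (h.eq_const_of_equilibrium hF haτ hpτ (hb _ hlt)).2 t₂ (ht₁.trans_le ht)

theorem apply_eq_zero_of_tendsto_atTop (hF : Continuous F) (h : IsWaveOn F c u p (Ioi a))
    (hu : Tendsto u atTop (𝓝 b)) : F b = 0 := by
  have hdiff {ξ : ℝ → ℝ} (hξ : Tendsto ξ atTop atTop) :
      Tendsto (fun x ↦ u (ξ x + 1) - u (ξ x)) atTop (𝓝 0) := by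
    simpa using (hu.comp (tendsto_atTop_add_const_right _ 1 hξ)).sub (hu.comp hξ)
  obtain ⟨ξ, hξ, hpξ⟩ := exists_tendsto_atTop_forall_deriv_eq_sub (a := a)
    (g := fun x ↦ u (x + 1) - u x) (g' := fun x ↦ p (x + 1) - p x) fun x hx ↦
      ((h.hasDerivAt_fst (x + 1) (mem_Ioi.2 (by linarith))).comp_add_const x 1).sub
        (h.hasDerivAt_fst x hx)
  obtain ⟨ζ, hζ, hFζ⟩ := exists_tendsto_atTop_forall_deriv_eq_sub (a := a)
    (g := fun x ↦ p x + c * u x) (g' := fun x ↦ -F (u x)) fun x hx ↦ by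
      convert! (h.hasDerivAt_snd x hx).add ((h.hasDerivAt_fst x hx).const_mul c) using 1
      ring
  have hp : Tendsto (fun x ↦ p (ξ x + 1) - p (ξ x)) atTop (𝓝 0) := by
    have hlim := (hdiff (tendsto_atTop_add_const_right _ 1 tendsto_id)).sub (hdiff tendsto_id)
    rw [sub_zero] at hlim
    exact hlim.congr' (by filter_upwards [eventually_gt_atTop a] with x hx using (hpξ x hx).symm)
  have hzero : Tendsto (fun x ↦ -F (u (ζ (ξ x)))) atTop (𝓝 0) := by
    have hlim := hp.add ((hdiff hξ).const_mul c)
    rw [mul_zero, add_zero] at hlim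
    refine hlim.congr' ?_
    filter_upwards [hξ.eventually_gt_atTop a] with x hx
    rw [hFζ _ hx]
    ring
  have hFb : Tendsto (fun x ↦ -F (u (ζ (ξ x)))) atTop (𝓝 (-F b)) :=
    ((hF.tendsto b).comp (hu.comp (hζ.comp hξ))).neg
  exact neg_eq_zero.1 (tendsto_nhds_unique hFb hzero)

theorem apply_eq_zero_of_tendsto_atBot (hF : Continuous F) (h : IsWaveOn F c u p univ)
    (hu : Tendsto u atBot (𝓝 b)) : F b = 0 :=
  (h.comp_neg.mono (subset_univ (Ioi 0))).apply_eq_zero_of_tendsto_atTop hF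
    (hu.comp tendsto_neg_atTop_atBot)

end IsWaveOn

/-! ### Shooting -/

/-- A monostable nonlinearity on `[0, 1]`, extended by `0` to the real line. The extension makes
the wave equation globally solvable without changing it for `[0, 1]`-valued functions. -/
structure IsMonostable (F : ℝ → ℝ) : Prop where
  lipschitz : ∃ K, LipschitzWith K F
  eq_zero : ∀ y ∉ Ioo (0 : ℝ) 1, F y = 0
  pos : ∀ y ∈ Ioo (0 : ℝ) 1, 0 < F y

theorem exists_isMonostable_eqOn_Icc {f : ℝ → ℝ} {K : ℝ≥0} (hf : LipschitzOnWith K f (Icc 0 1))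
    (hf₀ : f 0 = 0) (hf₁ : f 1 = 0) (hpos : ∀ y ∈ Ioo (0 : ℝ) 1, 0 < f y) :
    ∃ F, IsMonostable F ∧ EqOn f F (Icc 0 1) := by
  let F : ℝ → ℝ := IccExtend zero_le_one ((Icc 0 1).domRestrict f)
  have hfF : EqOn f F (Icc 0 1) := fun y hy ↦
    (IccExtend_of_mem zero_le_one ((Icc 0 1).domRestrict f) hy).symm
  refine ⟨F, ⟨⟨_, hf.to_restrict.comp (LipschitzWith.projIcc zero_le_one)⟩, fun y hy ↦ ?_,
    fun y hy ↦ hfF (Ioo_subset_Icc_self hy) ▸ hpos y hy⟩, hfF⟩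
  rcases le_or_gt y 0 with hy₀ | hy₀
  · exact (IccExtend_of_le_left _ _ hy₀).trans hf₀
  · exact (IccExtend_of_right_le _ _ (not_lt.1 fun hy₁ ↦ hy ⟨hy₀, hy₁⟩)).trans hf₁

namespace IsMonostable

variable {F u p : ℝ → ℝ} {c : ℝ}

theorem continuous (hF : IsMonostable F) : Continuous F :=
  hF.lipschitz.choose_spec.continuous

theorem nonneg (hF : IsMonostable F) (y : ℝ) : 0 ≤ F y := by
  by_cases hy : y ∈ Ioo 0 1
  · exact (hF.pos y hy).le
  · exact (hF.eq_zero y hy).ge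

theorem exists_snd_neg (hF : IsMonostable F) (h : IsWaveOn F c u p univ) (hu : u 0 ∈ Ioo 0 1)
    (hp : p 0 ≤ 0) : ∃ t ≥ 0, p t < 0 := by
  obtain ⟨K, hK⟩ := hF.lipschitz
  by_contra! hnonneg
  have hequil := (h.mono (subset_univ (Ioi (-1)))).equilibrium_of_snd_nonpos hK hF.nonneg
    (eventually_atTop.2 ⟨0, hnonneg⟩) neg_one_lt_zero hp 0 neg_one_lt_zero
  exact (hF.pos _ hu).ne' hequil.1

/-- Shooting from the points `(1/2 + s, s)` with `s ∈ [0, 1]`: the parameters whose trajectory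
overshoots `u = 1` and those whose trajectory turns back form disjoint nonempty open sets. -/
theorem exists_isWaveOn_fst_le_one_snd_nonneg (hF : IsMonostable F) (c : ℝ) :
    ∃ u p, IsWaveOn F c u p univ ∧ u 0 = 1 / 2 + p 0 ∧ ∀ t ≥ 0, u t ≤ 1 ∧ 0 ≤ p t := by
  obtain ⟨K, hK⟩ := hF.lipschitz
  obtain ⟨u, p, hwave, hu₀, hp₀, hcont⟩ := exists_isWaveOn_univ_family hK c
    (α := fun s : ℝ ↦ 1 / 2 + s) (β := fun s ↦ s) (by fun_prop) continuous_id
  let overshoot : Set ℝ := ⋃ t ≥ (0 : ℝ), {s | 1 < u s t}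
  let turnback : Set ℝ := ⋃ t ≥ (0 : ℝ), {s | p s t < 0}
  have hover_open : IsOpen overshoot :=
    isOpen_biUnion fun t ht ↦ isOpen_lt continuous_const (hcont t ht).1
  have hturn_open : IsOpen turnback :=
    isOpen_biUnion fun t ht ↦ isOpen_lt (hcont t ht).2 continuous_const
  have hone : 1 ∈ overshoot := mem_iUnion₂.2 ⟨0, le_rfl, by norm_num [hu₀]⟩
  have hzero : 0 ∈ turnback := by
    obtain ⟨t, ht, hneg⟩ := hF.exists_snd_neg (hwave 0) (by norm_num [hu₀]) (hp₀ 0).le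
    exact mem_iUnion₂.2 ⟨t, ht, hneg⟩
  have hdisjoint : ∀ s ∈ Icc (0 : ℝ) 1, s ∈ overshoot → s ∉ turnback := fun s hs hover hturn ↦ by
    obtain ⟨t₁, ht₁, hlt⟩ := mem_iUnion₂.1 hover
    obtain ⟨t₂, ht₂, hneg⟩ := mem_iUnion₂.1 hturn
    have hle := ((hwave s).mono (subset_univ (Ioi (-1)))).fst_le_of_snd_sign_change hK hF.nonneg
      (fun y hy ↦ hF.eq_zero y fun hmem ↦ hy.not_gt hmem.2) neg_one_lt_zero ht₂
      ((hp₀ s).symm ▸ hs.1) hneg (neg_one_lt_zero.trans_le ht₁)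
    exact hle.not_gt hlt
  obtain ⟨s, hs⟩ : ∃ s, s ∉ overshoot ∪ turnback := by
    by_contra! hcover
    obtain ⟨s, hs, hover, hturn⟩ := isPreconnected_Icc overshoot turnback hover_open hturn_open
      (fun s _ ↦ hcover s) ⟨1, right_mem_Icc.2 zero_le_one, hone⟩
      ⟨0, left_mem_Icc.2 zero_le_one, hzero⟩
    exact hdisjoint s hs hover hturn
  refine ⟨u s, p s, hwave s, by rw [hu₀, hp₀], fun t ht ↦ ⟨?_, ?_⟩⟩
  · exact not_lt.1 fun hlt ↦ hs (.inl (mem_iUnion₂.2 ⟨t, ht, hlt⟩))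
  · exact not_lt.1 fun hlt ↦ hs (.inr (mem_iUnion₂.2 ⟨t, ht, hlt⟩))

theorem exists_increasing_wave (hF : IsMonostable F) (c : ℝ) :
    ∃ u p, IsWaveOn F c u p univ ∧ (∀ x, 0 < p x) ∧ (∀ x, u x < 1) ∧ 0 < u 0 := by
  obtain ⟨K, hK⟩ := hF.lipschitz
  obtain ⟨u, p, h, h₀, hright⟩ := hF.exists_isWaveOn_fst_le_one_snd_nonneg c
  have hp (x : ℝ) : 0 < p x := by
    by_contra! hpx
    have hequil := (h.mono (subset_univ (Ioi (min x 0 - 1)))).equilibrium_of_snd_nonpos hK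
      hF.nonneg (eventually_atTop.2 ⟨0, fun t ht ↦ (hright t ht).2⟩) (t₀ := x) (by grind) hpx
      0 (by grind)
    rw [h₀, hequil.2] at hequil
    exact (hF.pos (1 / 2 + 0) (by norm_num)).ne' hequil.1
  have hmono : StrictMono u := strictMono_of_hasDerivAt_pos (fun x ↦ h.hasDerivAt_fst x trivial) hp
  refine ⟨u, p, h, hp, fun x ↦ ?_, by linarith [hp 0]⟩
  exact (hmono (show x < max x 0 + 1 by grind)).trans_le (hright _ (by grind)).1

theorem tendsto_atTop_one (hF : IsMonostable F) (h : IsWaveOn F c u p univ) (hmono : Monotone u)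
    (hle : ∀ x, u x ≤ 1) {x : ℝ} (hx : 0 < u x) : Tendsto u atTop (𝓝 1) := by
  have hbdd : BddAbove (range u) := ⟨1, forall_mem_range.2 hle⟩
  have hlim := tendsto_atTop_ciSup hmono hbdd
  have hzero := (h.mono (subset_univ (Ioi 0))).apply_eq_zero_of_tendsto_atTop hF.continuous hlim
  have hsup : ⨆ x, u x = 1 := (ciSup_le hle).eq_of_not_lt fun hlt ↦
    (hF.pos _ ⟨hx.trans_le (le_ciSup hbdd x), hlt⟩).ne' hzero
  rwa [hsup] at hlim

theorem tendsto_atBot_zero (hF : IsMonostable F) (h : IsWaveOn F c u p univ) (hmono : Monotone u)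
    (hge : ∀ x, 0 ≤ u x) {x : ℝ} (hx : u x < 1) : Tendsto u atBot (𝓝 0) := by
  have hbdd : BddBelow (range u) := ⟨0, forall_mem_range.2 hge⟩
  have hlim := tendsto_atBot_ciInf hmono hbdd
  have hzero := h.apply_eq_zero_of_tendsto_atBot hF.continuous hlim
  have hinf : ⨅ x, u x = 0 := (le_ciInf hge).eq_of_not_lt' fun hlt ↦
    (hF.pos _ ⟨hlt, (ciInf_le hbdd x).trans_lt hx⟩).ne' hzero
  rwa [hinf] at hlim

theorem isTravelingProfile (hF : IsMonostable F) (h : IsWaveOn F c u p univ) (hmono : Monotone u)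
    (hu : ∀ x, u x ∈ Ioo 0 1) : IsTravelingProfile F c u :=
  ⟨contDiffOn_univ.1 (h.contDiffOn_two isOpen_univ hF.continuous),
    fun x ↦ Ioo_subset_Icc_self (hu x), fun _ ↦ h.deriv_deriv_add isOpen_univ trivial,
    hF.tendsto_atBot_zero h hmono (fun x ↦ (hu x).1.le) (hu 0).2,
    hF.tendsto_atTop_one h hmono (fun x ↦ (hu x).2.le) (hu 0).1⟩

theorem isOptimalP1Profile_comp_max (hF : IsMonostable F) (h : IsWaveOn F c u p univ)
    (hmono : StrictMono u) (hle : ∀ x, u x ≤ 1) (hu₀ : u 0 = 0) :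
    IsOptimalP1Profile F c fun x ↦ u (max x 0) := by
  have hU : IsWaveOn F c (fun x ↦ u (max x 0)) p (Ioi 0) :=
    (h.mono (subset_univ _)).congr_fst isOpen_Ioi fun x hx ↦ by
      simp only [max_eq_left (mem_Ioi.1 hx).le]
  refine ⟨(continuousOn_univ.1 h.continuousOn_fst).comp (by fun_prop),
    hmono.monotone.comp fun x y hxy ↦ max_le_max_right 0 hxy,
    fun x ↦ ⟨hu₀.ge.trans (hmono.monotone (le_max_right x 0)), hle _⟩,
    fun x hx ↦ by simp only [max_eq_right hx, hu₀], hU.contDiffOn_two isOpen_Ioi hF.continuous,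
    fun x hx ↦ hU.deriv_deriv_add isOpen_Ioi hx, ?_⟩
  exact (hF.tendsto_atTop_one h hmono.monotone hle (hu₀.ge.trans_lt (hmono zero_lt_one))).comp
    (tendsto_atTop_mono (fun x ↦ le_max_left x 0) tendsto_id)

theorem exists_isOptimalP1Profile (hF : IsMonostable F) (hc : ¬∃ U, IsTravelingProfile F c U) :
    ∃ U, IsOptimalP1Profile F c U ∧ ∃ d > 0, HasDerivWithinAt U d (Ioi 0) 0 := by
  obtain ⟨u, p, h, hp, hlt, hu₀⟩ := hF.exists_increasing_wave c
  have hmono : StrictMono u := strictMono_of_hasDerivAt_pos (fun x ↦ h.hasDerivAt_fst x trivial) hp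
  obtain ⟨x, hx⟩ : ∃ x, u x ≤ 0 := by
    by_contra! hpos
    exact hc ⟨u, hF.isTravelingProfile h hmono.monotone fun x ↦ ⟨hpos x, hlt x⟩⟩
  obtain ⟨r, hr⟩ : ∃ r, u r = 0 := mem_range_of_exists_le_of_exists_ge
    (continuousOn_univ.1 h.continuousOn_fst) ⟨x, hx⟩ ⟨0, hu₀.le⟩
  have hshift := h.comp_const_add r
  refine ⟨_, hF.isOptimalP1Profile_comp_max hshift (hmono.comp add_right_strictMono)
    (fun x ↦ (hlt _).le) (by simpa using hr), p r, hp r, ?_⟩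
  have hderiv := (hshift.hasDerivAt_fst 0 trivial).hasDerivWithinAt (s := Ioi 0)
  simp only [add_zero] at hderiv
  exact hderiv.congr (fun x hx ↦ by simp only [max_eq_left (mem_Ioi.1 hx).le]) (by simp)

end IsMonostable

/-! ### Uniqueness in the phase plane -/

theorem le_of_hasDerivAt_mul_self {w k : ℝ → ℝ} {a b : ℝ} (hab : a ≤ b)
    (hw : ∀ s ∈ Icc a b, HasDerivAt w (k s * w s) s) (hk : ∀ s ∈ Icc a b, 0 ≤ k s)
    (ha : 0 < w a) : w a ≤ w b := by
  have hcont : ContinuousOn w (Icc a b) := fun s hs ↦ (hw s hs).continuousAt.continuousWithinAt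
  have hsq : MonotoneOn (fun s ↦ w s ^ 2) (Icc a b) := by
    refine monotoneOn_of_hasDerivWithinAt_nonneg (convex_Icc a b) (hcont.pow 2)
      (fun s hs ↦ ((hw s (interior_subset hs)).pow 2).hasDerivWithinAt) fun s hs ↦ ?_
    have hks := hk s (interior_subset hs)
    calc 0 ≤ 2 * k s * w s ^ 2 := by positivity
      _ = (2 : ℕ) * w s ^ (2 - 1) * (k s * w s) := by push_cast; ring
  have hb : 0 < w b := by
    by_contra! hb
    obtain ⟨s, hs, hzero⟩ := intermediate_value_Icc' hab hcont ⟨hb, ha.le⟩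
    have hle := hsq (left_mem_Icc.2 hab) hs hs.1
    simp only [hzero] at hle
    nlinarith
  exact le_of_sq_le_sq (hsq (left_mem_Icc.2 hab) (right_mem_Icc.2 hab) hab) hb.le

/-- The slope of a wave profile `U` as a function of its height: `phaseSpeed U (U x) = U' x` for
`x > 0`. It describes the trajectory of `U` in the phase plane as a graph, independently of
translations; it is only meaningful on `U '' Ioi 0`. -/
noncomputable def phaseSpeed (U : ℝ → ℝ) (y : ℝ) : ℝ :=
  deriv U (Function.invFunOn U (Ioi 0) y)

namespace IsOptimalP1Profile

variable {F U V : ℝ → ℝ} {c x y : ℝ}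

theorem congr {f g : ℝ → ℝ} (hU : IsOptimalP1Profile f c U) (hfg : EqOn f g (Icc 0 1)) :
    IsOptimalP1Profile g c U :=
  let ⟨hcont, hmono, hmem, hzero, hdiff, hode, hlim⟩ := hU
  ⟨hcont, hmono, hmem, hzero, hdiff, fun x hx ↦ hfg (hmem x) ▸ hode x hx, hlim⟩

theorem continuous (hU : IsOptimalP1Profile F c U) : Continuous U := hU.1

theorem monotone (hU : IsOptimalP1Profile F c U) : Monotone U := hU.2.1

theorem mem_Icc (hU : IsOptimalP1Profile F c U) (x : ℝ) : U x ∈ Icc 0 1 := hU.2.2.1 x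

theorem eq_zero_of_nonpos (hU : IsOptimalP1Profile F c U) (hx : x ≤ 0) : U x = 0 :=
  hU.2.2.2.1 x hx

theorem contDiffOn (hU : IsOptimalP1Profile F c U) : ContDiffOn ℝ 2 U (Ioi 0) := hU.2.2.2.2.1

theorem wave_eq (hU : IsOptimalP1Profile F c U) (hx : 0 < x) :
    deriv (deriv U) x + c * deriv U x + F (U x) = 0 := hU.2.2.2.2.2.1 x hx

theorem tendsto_atTop (hU : IsOptimalP1Profile F c U) : Tendsto U atTop (𝓝 1) :=
  hU.2.2.2.2.2.2

theorem contDiffAt (hU : IsOptimalP1Profile F c U) (hx : 0 < x) : ContDiffAt ℝ 2 U x :=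
  hU.contDiffOn.contDiffAt (Ioi_mem_nhds hx)

theorem isWaveOn (hU : IsOptimalP1Profile F c U) : IsWaveOn F c U (deriv U) (Ioi 0) := by
  refine ⟨fun x hx ↦ ((hU.contDiffAt hx).differentiableAt two_ne_zero).hasDerivAt,
    fun x hx ↦ ?_⟩
  have hderiv : ContDiffOn ℝ 1 (deriv U) (Ioi 0) :=
    ((contDiffOn_succ_iff_deriv_of_isOpen isOpen_Ioi).1 hU.contDiffOn).2.2
  convert! ((hderiv.contDiffAt (Ioi_mem_nhds hx)).differentiableAt one_ne_zero).hasDerivAt using 1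
  linarith [hU.wave_eq hx]

theorem Ioo_subset_image (hU : IsOptimalP1Profile F c U) : Ioo 0 1 ⊆ U '' Ioi 0 := by
  intro y hy
  obtain ⟨x, rfl⟩ : y ∈ range U := mem_range_of_exists_le_of_exists_ge hU.continuous
    ⟨0, (hU.eq_zero_of_nonpos le_rfl).trans_le hy.1.le⟩
    (hU.tendsto_atTop.eventually_const_le hy.2).exists
  exact ⟨x, not_le.1 fun hx ↦ hy.1.ne' (hU.eq_zero_of_nonpos hx), rfl⟩

theorem deriv_pos (hU : IsOptimalP1Profile F c U) (hF : IsMonostable F) (hx : 0 < x) :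
    0 < deriv U x := by
  obtain ⟨K, hK⟩ := hF.lipschitz
  obtain ⟨t, ht, hhalf⟩ := hU.Ioo_subset_image (show (1 / 2 : ℝ) ∈ Ioo 0 1 by norm_num)
  by_contra! hderiv
  have hequil := hU.isWaveOn.equilibrium_of_snd_nonpos hK hF.nonneg
    (.of_forall fun _ ↦ hU.monotone.deriv_nonneg) hx hderiv t ht
  exact (hF.pos (U t) (by norm_num [hhalf])).ne' hequil.1

theorem strictMonoOn (hU : IsOptimalP1Profile F c U) (hF : IsMonostable F) :
    StrictMonoOn U (Ici 0) :=
  strictMonoOn_of_deriv_pos (convex_Ici 0) hU.continuous.continuousOn fun x hx ↦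
    hU.deriv_pos hF (by simpa using hx)

theorem mem_Ioo (hU : IsOptimalP1Profile F c U) (hF : IsMonostable F) (hx : 0 < x) :
    U x ∈ Ioo 0 1 := by
  have hmono := hU.strictMonoOn hF
  exact ⟨(hU.eq_zero_of_nonpos le_rfl).ge.trans_lt (hmono self_mem_Ici hx.le hx),
    (hmono hx.le (by grind) (lt_add_one x)).trans_le (hU.mem_Icc _).2⟩

theorem invFunOn_apply (hU : IsOptimalP1Profile F c U) (hF : IsMonostable F) (hx : 0 < x) :
    Function.invFunOn U (Ioi 0) (U x) = x :=
  ((hU.strictMonoOn hF).injOn.mono Ioi_subset_Ici_self).leftInvOn_invFunOn hx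

theorem phaseSpeed_apply (hU : IsOptimalP1Profile F c U) (hF : IsMonostable F) (hx : 0 < x) :
    phaseSpeed U (U x) = deriv U x := by
  rw [phaseSpeed, hU.invFunOn_apply hF hx]

theorem phaseSpeed_pos (hU : IsOptimalP1Profile F c U) (hF : IsMonostable F) (hy : y ∈ Ioo 0 1) :
    0 < phaseSpeed U y := by
  obtain ⟨x, hx, rfl⟩ := hU.Ioo_subset_image hy
  rw [hU.phaseSpeed_apply hF hx]
  exact hU.deriv_pos hF hx

theorem hasDerivAt_phaseSpeed (hU : IsOptimalP1Profile F c U) (hF : IsMonostable F)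
    (hy : y ∈ Ioo 0 1) : HasDerivAt (phaseSpeed U) (-c - F y / phaseSpeed U y) y := by
  obtain ⟨x, hx, rfl⟩ := hU.Ioo_subset_image hy
  have hpos := hU.deriv_pos hF hx
  have hinv : HasDerivAt (Function.invFunOn U (Ioi 0)) (deriv U x)⁻¹ (U x) :=
    (((hU.contDiffAt hx).hasStrictDerivAt two_ne_zero).to_local_left_inverse hpos.ne'
      (eventually_of_mem (Ioi_mem_nhds hx) fun _ ↦ hU.invFunOn_apply hF)).hasDerivAt
  have hslope := hU.isWaveOn.hasDerivAt_snd x hx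
  rw [← hU.invFunOn_apply hF hx] at hslope
  convert! hslope.comp (U x) hinv using 1
  rw [hU.invFunOn_apply hF hx, hU.phaseSpeed_apply hF hx]
  field_simp

theorem exists_phaseSpeed_lt (hU : IsOptimalP1Profile F c U) (hF : IsMonostable F)
    (hy : y ∈ Ioo 0 1) {δ : ℝ} (hδ : 0 < δ) : ∃ z ∈ Ico y 1, phaseSpeed U z < δ := by
  obtain ⟨x, hx, rfl⟩ := hU.Ioo_subset_image hy
  have hb : x < x + δ⁻¹ := lt_add_of_pos_right x (inv_pos.2 hδ)
  obtain ⟨ξ, hξ, hslope⟩ := exists_hasDerivAt_eq_slope U (deriv U) hb hU.continuous.continuousOn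
    fun t ht ↦ hU.isWaveOn.hasDerivAt_fst t (hx.trans ht.1)
  have hξ₀ : 0 < ξ := lt_trans hx hξ.1
  refine ⟨U ξ, ⟨hU.monotone hξ.1.le, (hU.mem_Ioo hF hξ₀).2⟩, ?_⟩
  rw [hU.phaseSpeed_apply hF hξ₀, hslope, add_sub_cancel_left, div_inv_eq_mul]
  have hrise : U (x + δ⁻¹) - U x < 1 := by
    linarith [(hU.mem_Ioo hF hx).1, (hU.mem_Ioo hF (lt_trans hx hb)).2]
  exact mul_lt_of_lt_one_left hδ hrise

/-- The difference of two phase speeds grows with the height, so a gap at some height would keep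
the larger speed away from `0` and carry the faster profile beyond height `1`. -/
theorem phaseSpeed_le (hU : IsOptimalP1Profile F c U) (hV : IsOptimalP1Profile F c V)
    (hF : IsMonostable F) (hy : y ∈ Ioo 0 1) : phaseSpeed U y ≤ phaseSpeed V y := by
  by_contra! hlt
  obtain ⟨z, hz, hsmall⟩ := hU.exists_phaseSpeed_lt hF hy (sub_pos.2 hlt)
  have hmem {s : ℝ} (hs : s ∈ Icc y z) : s ∈ Ioo 0 1 :=
    ⟨hy.1.trans_le hs.1, hs.2.trans_lt hz.2⟩
  have hgap := le_of_hasDerivAt_mul_self (w := fun s ↦ phaseSpeed U s - phaseSpeed V s)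
    (k := fun s ↦ F s / (phaseSpeed U s * phaseSpeed V s)) hz.1
    (fun s hs ↦ by
      have hUs := hU.phaseSpeed_pos hF (hmem hs)
      have hVs := hV.phaseSpeed_pos hF (hmem hs)
      convert! (hU.hasDerivAt_phaseSpeed hF (hmem hs)).sub
        (hV.hasDerivAt_phaseSpeed hF (hmem hs)) using 1
      field_simp
      ring)
    (fun s hs ↦ div_nonneg (hF.nonneg s)
      (mul_pos (hU.phaseSpeed_pos hF (hmem hs)) (hV.phaseSpeed_pos hF (hmem hs))).le)
    (sub_pos.2 hlt)
  have hVz := hV.phaseSpeed_pos hF (hmem (right_mem_Icc.2 hz.1))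
  linarith

theorem le_of_phase_eq (hU : IsOptimalP1Profile F c U) (hV : IsOptimalP1Profile F c V)
    (hF : IsMonostable F) (hy : 0 < y) (heq : U x = V y) (hderiv : deriv U x = deriv V y) :
    x ≤ y := by
  obtain ⟨K, hK⟩ := hF.lipschitz
  by_contra! hlt
  have hshift := (hV.isWaveOn.comp_const_add (y - x)).mono
    (fun t (ht : x - y < t) ↦ show 0 < y - x + t by linarith)
  have hUV : EqOn U (fun t ↦ V (y - x + t)) (Ioi (x - y)) :=
    ((hU.isWaveOn.mono (Ioi_subset_Ioi (sub_pos.2 hlt).le)).eqOn_Ioi hK hshift (t₀ := x)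
      (by linarith) (by simpa using heq) (by simpa using hderiv)).1
  have hstart : U (x - y) = V (y - x + (x - y)) :=
    hUV.closure hU.continuous (hV.continuous.comp (by fun_prop)) (by simp)
  rw [show y - x + (x - y) = 0 by ring, hV.eq_zero_of_nonpos le_rfl] at hstart
  exact (hU.mem_Ioo hF (sub_pos.2 hlt)).1.ne' hstart

theorem unique (hU : IsOptimalP1Profile F c U) (hV : IsOptimalP1Profile F c V)
    (hF : IsMonostable F) : U = V := by
  obtain ⟨K, hK⟩ := hF.lipschitz
  have hhalf : (1 / 2 : ℝ) ∈ Ioo 0 1 := by norm_num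
  obtain ⟨x, hx, hUx⟩ := hU.Ioo_subset_image hhalf
  obtain ⟨y, hy, hVy⟩ := hV.Ioo_subset_image hhalf
  have heq : U x = V y := hUx.trans hVy.symm
  have hderiv : deriv U x = deriv V y := by
    rw [← hU.phaseSpeed_apply hF hx, ← hV.phaseSpeed_apply hF hy, hUx, hVy]
    exact (hU.phaseSpeed_le hV hF hhalf).antisymm (hV.phaseSpeed_le hU hF hhalf)
  obtain rfl : x = y := (hU.le_of_phase_eq hV hF hy heq hderiv).antisymm
    (hV.le_of_phase_eq hU hF hx heq.symm hderiv.symm)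
  funext t
  rcases le_or_gt t 0 with ht | ht
  · rw [hU.eq_zero_of_nonpos ht, hV.eq_zero_of_nonpos ht]
  · exact (hU.isWaveOn.eqOn_Ioi hK hV.isWaveOn hx heq hderiv).1 ht

end IsOptimalP1Profile

theorem IsTravelingProfile.congr {f g U : ℝ → ℝ} {c : ℝ} (hU : IsTravelingProfile f c U)
    (hfg : EqOn f g (Icc 0 1)) : IsTravelingProfile g c U :=
  let ⟨hdiff, hmem, hode, hlim⟩ := hU
  ⟨hdiff, hmem, fun x ↦ hfg (hmem x) ▸ hode x, hlim⟩

theorem pos_of_strictConcaveOn_Icc {f : ℝ → ℝ} {a b x : ℝ} (hf : StrictConcaveOn ℝ (Icc a b) f)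
    (ha : 0 ≤ f a) (hb : 0 ≤ f b) (hx : x ∈ Ioo a b) : 0 < f x := by
  have hab : a < b := hx.1.trans hx.2
  exact (le_min ha hb).trans_lt <| hf.lt_on_openSegment (left_mem_Icc.2 hab.le)
    (right_mem_Icc.2 hab.le) hab.ne (by rwa [openSegment_eq_Ioo hab])

theorem optimal_controlled_profile_P1_monostable_general
    {f : ℝ → ℝ} {K : ℝ≥0} (hf : LipschitzOnWith K f (Icc 0 1)) (hf₀ : f 0 = 0) (hf₁ : f 1 = 0)
    (hpos : ∀ y ∈ Ioo (0 : ℝ) 1, 0 < f y) {c : ℝ} (hc : ¬∃ U, IsTravelingProfile f c U) :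
    ∃ U : ℝ → ℝ,
      IsOptimalP1Profile f c U ∧
      (∃ d > (0 : ℝ), HasDerivWithinAt U d (Ioi 0) 0) ∧
      (∀ V : ℝ → ℝ, IsOptimalP1Profile f c V → V = U) := by
  obtain ⟨F, hF, hfF⟩ := exists_isMonostable_eqOn_Icc hf hf₀ hf₁ hpos
  obtain ⟨U, hU, hderiv⟩ := hF.exists_isOptimalP1Profile (c := c)
    fun ⟨U, hU⟩ ↦ hc ⟨U, hU.congr hfF.symm⟩
  exact ⟨U, hU.congr hfF.symm, hderiv, fun V hV ↦ (hV.congr hfF).unique hU hF⟩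

/-- In the monostable case, for each `c > c*` there is a unique
continuous nondecreasing `U` vanishing on `(-∞,0]`, solving `U'' + cU' + f(U) = 0`
on `(0,∞)` with `U(+∞) = 1`; moreover `U'(0+)` exists and is strictly positive. -/
theorem optimal_controlled_profile_P1_monostable
    (f : ℝ → ℝ) (hf : ContDiff ℝ 2 f) (hf0 : f 0 = 0) (hf1 : f 1 = 0)
    (hf'' : ∀ u ∈ Icc (0:ℝ) 1, deriv (deriv f) u < 0)
    (cstar : ℝ) (hcstar : cstar < 0)
    (hchar : ∀ c, (∃ U, IsTravelingProfile f c U) ↔ c ≤ cstar)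
    (c : ℝ) (hc : cstar < c) :
    ∃ U : ℝ → ℝ,
      IsOptimalP1Profile f c U ∧
      (∃ d > (0:ℝ), HasDerivWithinAt U d (Ioi 0) 0) ∧
      (∀ V : ℝ → ℝ, IsOptimalP1Profile f c V → V = U) := by
  have hconcave : StrictConcaveOn ℝ (Icc 0 1) f :=
    strictConcaveOn_of_deriv2_neg' (convex_Icc 0 1) hf.continuous.continuousOn hf''
  obtain ⟨K, hK⟩ := (hf.of_le one_le_two).locallyLipschitz.locallyLipschitzOn
    |>.exists_lipschitzOnWith_of_compact (isCompact_Icc (a := (0 : ℝ)) (b := 1))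
  exact optimal_controlled_profile_P1_monostable_general hK hf0 hf1
    (fun y hy ↦ pos_of_strictConcaveOn_Icc hconcave hf0.ge hf1.ge hy) ((hchar c).not.2 hc.not_ge)
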